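/- arXiv:1606.00968 — 10 statements merged into one kernel-verified Lean document; each statement's English description precedes it below -/
import Mathlib

section
/- Let φ : ℝ → ℝ be a differentiable, non-negative function whose derivative is H-Lipschitz (i.e. |φ'(a) - φ'(a')| ≤ H·|a - a'| for all a, a' ∈ ℝ), where H > 0. Then for every a ∈ ℝ, |φ'(a)| ≤ √(4·H·φ(a)). -/
/-- Self-bounding property of Lipschitz-smooth functions (Lemma 4 of the paper):
if `φ : ℝ → ℝ` is differentiable, non-negative, and its derivative is `H`-Lipschitz
(`H > 0`), then `|φ'(a)| ≤ √(4·H·φ(a))` for every `a`. -/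
theorem self_bounding_property (φ : ℝ → ℝ) (H : ℝ) (hH : 0 < H)
    (hdiff : Differentiable ℝ φ)
    (hnonneg : ∀ a : ℝ, 0 ≤ φ a)
    (hsmooth : ∀ a a' : ℝ, |deriv φ a - deriv φ a'| ≤ H * |a - a'|) :
    ∀ a : ℝ, |deriv φ a| ≤ Real.sqrt (4 * H * φ a) := by
  intro a
  apply Real.le_sqrt_of_sq_le
  rw [sq_abs]
  set d := deriv φ a with hd
  obtain ⟨t, ht⟩ : ∃ t : ℝ, d = 2 * H * t := ⟨d / (2 * H), by field_simp⟩
  rcases lt_trichotomy t 0 with h | h | h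
  · obtain ⟨c, ⟨hc1, hc2⟩, hc⟩ := exists_deriv_eq_slope φ (show a < a - t by linarith)
      hdiff.continuous.continuousOn hdiff.differentiableOn
    have h1 := hsmooth c a
    rw [abs_of_pos (by linarith : 0 < c - a), ← hd] at h1
    have h2 := (abs_le.1 h1).2
    rw [eq_div_iff (by linarith)] at hc
    have h3 := hnonneg (a - t)
    have h4 : H * (c - a) ≤ H * (-t) := by gcongr; linarith
    have h5 : deriv φ c ≤ H * t := by linarith
    have h6 : deriv φ c * (-t) ≤ H * t * (-t) := mul_le_mul_of_nonneg_right h5 (by linarith)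
    have h7 : H * (t * t) ≤ φ a := by
      have : deriv φ c * (a - t - a) = deriv φ c * (-t) := by ring
      linarith
    rw [ht]
    nlinarith
  · rw [ht, h]
    have := hnonneg a
    simp; positivity
  · obtain ⟨c, ⟨hc1, hc2⟩, hc⟩ := exists_deriv_eq_slope φ (show a - t < a by linarith)
      hdiff.continuous.continuousOn hdiff.differentiableOn
    have h1 := hsmooth c a
    rw [abs_of_neg (by linarith : c - a < 0), ← hd] at h1
    have h2 := (abs_le.1 h1).1
    rw [eq_div_iff (by linarith)] at hc
    have h3 := hnonneg (a - t)
    have h4 : H * (-(c - a)) ≤ H * t := by gcongr; linarith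
    have h5 : H * t ≤ deriv φ c := by linarith
    have h6 : H * t * t ≤ deriv φ c * t := mul_le_mul_of_nonneg_right h5 (by linarith)
    have h7 : H * (t * t) ≤ φ a := by
      have : deriv φ c * (a - (a - t)) = deriv φ c * t := by ring
      linarith
    rw [ht]
    nlinarith
end

section
/- Let φ : ℝ → ℝ be a differentiable, non-negative function whose derivative is H-Lipschitz, where H > 0. Then for all a, a' ∈ ℝ, (φ(a) - φ(a'))² ≤ 6·H·(φ(a) + φ(a'))·(a - a')². -/
theorem mvt_aux (φ : ℝ → ℝ) (hdiff : Differentiable ℝ φ) (x y : ℝ) :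
    ∃ c, φ y - φ x = deriv φ c * (y - x) ∧ |c - x| ≤ |y - x| := by
  rcases lt_trichotomy x y with h | h | h
  · obtain ⟨c, hc, e⟩ := exists_deriv_eq_slope φ h hdiff.continuous.continuousOn
      hdiff.differentiableOn
    have : y - x ≠ 0 := by linarith
    refine ⟨c, by rw [e]; field_simp, ?_⟩
    rw [abs_of_pos (by linarith [hc.1]), abs_of_pos (by linarith)]
    linarith [hc.2]
  · subst h; exact ⟨x, by simp, by simp⟩
  · obtain ⟨c, hc, e⟩ := exists_deriv_eq_slope φ h hdiff.continuous.continuousOn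
      hdiff.differentiableOn
    have : x - y ≠ 0 := by linarith
    refine ⟨c, by rw [e]; field_simp; ring, ?_⟩
    rw [abs_of_neg (by linarith [hc.2]), abs_of_neg (by linarith)]
    linarith [hc.1]

theorem descent_aux (φ : ℝ → ℝ) (H : ℝ) (hH : 0 < H)
    (hdiff : Differentiable ℝ φ)
    (hsmooth : ∀ a a' : ℝ, |deriv φ a - deriv φ a'| ≤ H * |a - a'|) (x y : ℝ) :
    φ y ≤ φ x + deriv φ x * (y - x) + H * (y - x) ^ 2 := by
  obtain ⟨c, e, hc⟩ := mvt_aux φ hdiff x y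
  have h1 : (deriv φ c - deriv φ x) * (y - x) ≤ H * (y - x) ^ 2 := by
    calc _ ≤ |(deriv φ c - deriv φ x) * (y - x)| := le_abs_self _
      _ = |deriv φ c - deriv φ x| * |y - x| := abs_mul _ _
      _ ≤ (H * |y - x|) * |y - x| := by
        gcongr
        exact (hsmooth c x).trans (by gcongr)
      _ = H * (y - x) ^ 2 := by rw [← sq_abs (y - x)]; ring
  linarith

/-- Lemma 5 (1-d case) of the paper: if `φ : ℝ → ℝ` is differentiable, non-negative,
and its derivative is `H`-Lipschitz (`H > 0`), then for all `a, a'`,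
`(φ(a) - φ(a'))² ≤ 6·H·(φ(a) + φ(a'))·(a - a')²`. -/
theorem one_dim_H_bound (φ : ℝ → ℝ) (H : ℝ) (hH : 0 < H)
    (hdiff : Differentiable ℝ φ)
    (hnonneg : ∀ a : ℝ, 0 ≤ φ a)
    (hsmooth : ∀ a a' : ℝ, |deriv φ a - deriv φ a'| ≤ H * |a - a'|) :
    ∀ a a' : ℝ, (φ a - φ a') ^ 2 ≤ 6 * H * (φ a + φ a') * (a - a') ^ 2 := by
  have key : ∀ a b : ℝ, φ b ≤ φ a →
      (φ a - φ b) ^ 2 ≤ 6 * H * (φ a + φ b) * (a - b) ^ 2 := by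
    intro a b hab
    have hd := descent_aux φ H hH hdiff hsmooth b a
    have hg : (deriv φ b) ^ 2 ≤ 4 * H * φ b := by
      have h := descent_aux φ H hH hdiff hsmooth b (b - deriv φ b / (2 * H))
      have h0 := hnonneg (b - deriv φ b / (2 * H))
      have e : φ b + deriv φ b * (b - deriv φ b / (2 * H) - b)
          + H * (b - deriv φ b / (2 * H) - b) ^ 2 = φ b - (deriv φ b) ^ 2 / (4 * H) := by
        field_simp; ring
      have h2 : (deriv φ b) ^ 2 / (4 * H) ≤ φ b := by linarith
      rw [div_le_iff₀ (by positivity)] at h2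
      linarith
    have hb := hnonneg b
    have hHd : 0 ≤ H * (a - b) ^ 2 := by positivity
    by_cases hc : φ a - φ b ≤ 6 * (H * (a - b) ^ 2)
    · have h1 : (φ a - φ b) * (φ a - φ b) ≤ 6 * (H * (a - b) ^ 2) * (φ a + φ b) :=
        mul_le_mul hc (by linarith) (by linarith) (by positivity)
      linarith
    · push Not at hc
      have h1 : 5 / 6 * (φ a - φ b) ≤ deriv φ b * (a - b) := by linarith
      have h2 : (5 / 6 * (φ a - φ b)) ^ 2 ≤ (deriv φ b * (a - b)) ^ 2 :=
        pow_le_pow_left₀ (by linarith) h1 2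
      have h3 : (deriv φ b) ^ 2 * (a - b) ^ 2 ≤ 4 * H * φ b * (a - b) ^ 2 := by gcongr
      have h4 : 0 ≤ H * (a - b) ^ 2 * φ b := mul_nonneg hHd hb
      have h5 : 0 ≤ H * (a - b) ^ 2 * φ a := mul_nonneg hHd (hnonneg a)
      nlinarith
  intro a a'
  rcases le_total (φ a') (φ a) with h | h
  · exact key a a' h
  · have := key a' a h
    linarith
end

section
/- Let φ : ℝ^k → ℝ be a differentiable function with H-Lipschitz gradient (with respect to the Euclidean norm), where H > 0, and suppose 0 ≤ φ(a) ≤ R for all a ∈ ℝ^k, where R > 0. Then for all a, a' ∈ ℝ^k, |φ(a) - φ(a')| ≤ √(12·H·R)·‖a - a'‖. -/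
/-- If `φ : ℝ^k → ℝ` is differentiable with `H`-Lipschitz gradient (`H > 0`) and
`0 ≤ φ(a) ≤ R` for all `a` (`R > 0`), then `φ` is `√(12·H·R)`-Lipschitz:
`|φ(a) - φ(a')| ≤ √(12·H·R)·‖a - a'‖`. -/
theorem bounded_smooth_lipschitz {k : ℕ}
    (φ : EuclideanSpace ℝ (Fin k) → ℝ) (H R : ℝ) (hH : 0 < H) (hR : 0 < R)
    (hdiff : Differentiable ℝ φ)
    (hbound : ∀ a : EuclideanSpace ℝ (Fin k), 0 ≤ φ a ∧ φ a ≤ R)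
    (hsmooth : ∀ a a' : EuclideanSpace ℝ (Fin k),
      ‖gradient φ a - gradient φ a'‖ ≤ H * ‖a - a'‖) :
    ∀ a a' : EuclideanSpace ℝ (Fin k),
      |φ a - φ a'| ≤ Real.sqrt (12 * H * R) * ‖a - a'‖ := by
  have hs : ∀ a b, ‖fderiv ℝ φ a - fderiv ℝ φ b‖ ≤ H * ‖a - b‖ := by
    intro a b
    have h := hsmooth a b
    unfold gradient at h
    rwa [← map_sub, LinearIsometryEquiv.norm_map] at h
  have hg : ∀ a, ‖gradient φ a‖ = ‖fderiv ℝ φ a‖ := by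
    intro a
    unfold gradient
    rw [LinearIsometryEquiv.norm_map]
  have hgi : ∀ a v, fderiv ℝ φ a v = inner ℝ (gradient φ a) v := by
    intro a v
    unfold gradient
    rw [InnerProductSpace.toDual_symm_apply]
  have key : ∀ a, ‖fderiv ℝ φ a‖ ≤ Real.sqrt (12 * H * R) := by
    intro a
    apply Real.le_sqrt_of_sq_le
    set g := gradient φ a with hgdef
    set t : ℝ := 1 / (2 * H) with ht
    have htpos : 0 < t := by positivity
    set b := a - t • g with hb
    have hba : b - a = -(t • g) := by rw [hb]; abel
    have hn : ‖b - a‖ = t * ‖g‖ := by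
      rw [hba, norm_neg, norm_smul, Real.norm_of_nonneg htpos.le]
    have hmv := (convex_segment (𝕜 := ℝ) a b).norm_image_sub_le_of_norm_fderiv_le'
      (f := φ) (φ := fderiv ℝ φ a) (C := H * (t * ‖g‖)) (fun x _ => hdiff x)
      (fun x hx => by
        refine (hs x a).trans ?_
        have : ‖x - a‖ ≤ ‖b - a‖ := norm_sub_le_of_mem_segment hx
        rw [← hn]
        gcongr) (left_mem_segment ℝ a b) (right_mem_segment ℝ a b)
    rw [hn, hgi, hba, inner_neg_right, inner_smul_right, ← hgdef,
      real_inner_self_eq_norm_sq, Real.norm_eq_abs] at hmv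
    have h1 := (abs_le.1 hmv).2
    have h2 := (hbound b).1
    have h3 := (hbound a).2
    have hHt : H * t = 1 / 2 := by rw [ht]; field_simp
    have h4 : H * (t * ‖g‖) * (t * ‖g‖) = t * ‖g‖ ^ 2 / 2 := by
      linear_combination (t * ‖g‖ ^ 2) * hHt
    have h5 : t * ‖g‖ ^ 2 / 2 ≤ R := by
      have h6 := (abs_le.1 hmv).1
      linarith
    have h7 : ‖g‖ ^ 2 ≤ 4 * H * R := by
      have := mul_le_mul_of_nonneg_left h5 hH.le
      have h8 : H * (t * ‖g‖ ^ 2 / 2) = ‖g‖ ^ 2 / 4 := by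
        linear_combination (‖g‖ ^ 2 / 2) * hHt
      linarith
    rw [← hg, ← hgdef]
    have := mul_pos hH hR
    linarith
  intro a a'
  have := (convex_univ (𝕜 := ℝ)).norm_image_sub_le_of_norm_fderiv_le (f := φ)
    (fun x _ => hdiff x) (fun x _ => key x) (Set.mem_univ a') (Set.mem_univ a)
  simpa [Real.norm_eq_abs] using this
end

section
/- Let X be a set of contexts and let π, π̂ : X × ℝ^k → ℝ^k be policies that are each γ-Lipschitz in the action component for some γ ∈ (0,1) (for every fixed x and all a, a', ‖π(x,a) − π(x,a')‖ ≤ γ‖a − a'‖ and likewise for π̂). Fix β ∈ (0,1) and define π'(x,a) = β·π̂(x,a) + (1−β)·π(x,a). Fix a context sequence x₁,…,x_T and an initial action a₀, and define the roll-outs a_t = π(x_t, a_{t−1}) and a'_t = π'(x_t, a'_{t−1}) with a'₀ = a₀. Suppose ε ≥ 0 satisfies ‖π̂(x_t, a_{t−1}) − π(x_t, a_{t−1})‖ ≤ ε for all t = 1,…,T. Then for every t = 0,1,…,T, ‖a'_t − a_t‖ ≤ β·ε / ((1−β)·(1−γ)). -/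
/-- The key claim in the proof of Theorem 2 of the paper: for policies `π, π̂` that are
`γ`-Lipschitz in the action component (`γ ∈ (0,1)`), the roll-out of the interpolation
`π' = β·π̂ + (1−β)·π` stays within `β·ε/((1−β)·(1−γ))` of the roll-out of `π`, where
`ε` bounds `‖π̂ − π‖` along the roll-out of `π`. -/
theorem interpolated_rollout_deviation_bound {X : Type*} {k : ℕ}
    (π πhat : X × EuclideanSpace ℝ (Fin k) → EuclideanSpace ℝ (Fin k))
    (γ : ℝ) (hγ : γ ∈ Set.Ioo (0 : ℝ) 1)
    (hπ : ∀ (x : X) (a a' : EuclideanSpace ℝ (Fin k)),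
      ‖π (x, a) - π (x, a')‖ ≤ γ * ‖a - a'‖)
    (hπhat : ∀ (x : X) (a a' : EuclideanSpace ℝ (Fin k)),
      ‖πhat (x, a) - πhat (x, a')‖ ≤ γ * ‖a - a'‖)
    (β : ℝ) (hβ : β ∈ Set.Ioo (0 : ℝ) 1)
    (π' : X × EuclideanSpace ℝ (Fin k) → EuclideanSpace ℝ (Fin k))
    (hπ' : ∀ (x : X) (a : EuclideanSpace ℝ (Fin k)),
      π' (x, a) = β • πhat (x, a) + (1 - β) • π (x, a))
    (T : ℕ) (x : ℕ → X) (a₀ : EuclideanSpace ℝ (Fin k))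
    (a a' : ℕ → EuclideanSpace ℝ (Fin k))
    (ha0 : a 0 = a₀) (ha'0 : a' 0 = a₀)
    (ha : ∀ t : ℕ, a (t + 1) = π (x (t + 1), a t))
    (ha' : ∀ t : ℕ, a' (t + 1) = π' (x (t + 1), a' t))
    (ε : ℝ) (hε : 0 ≤ ε)
    (hclose : ∀ t : ℕ, 1 ≤ t → t ≤ T →
      ‖πhat (x t, a (t - 1)) - π (x t, a (t - 1))‖ ≤ ε) :
    ∀ t : ℕ, t ≤ T → ‖a' t - a t‖ ≤ β * ε / ((1 - β) * (1 - γ)) := by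
  obtain ⟨hγ0, hγ1⟩ := hγ
  obtain ⟨hβ0, hβ1⟩ := hβ
  have key : ∀ t : ℕ, t ≤ T → ‖a' t - a t‖ * (1 - γ) ≤ β * ε := by
    intro t
    induction t with
    | zero =>
      intro _
      rw [ha0, ha'0, sub_self, norm_zero, zero_mul]
      positivity
    | succ t ih =>
      intro ht
      have ih := ih (by omega)
      have hc := hclose (t + 1) (by omega) ht
      rw [Nat.add_sub_cancel] at hc
      have h1 := hπhat (x (t + 1)) (a' t) (a t)
      have h2 := hπ (x (t + 1)) (a' t) (a t)
      have e : a' (t + 1) - a (t + 1)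
          = β • (πhat (x (t + 1), a' t) - πhat (x (t + 1), a t))
            + (1 - β) • (π (x (t + 1), a' t) - π (x (t + 1), a t))
            + β • (πhat (x (t + 1), a t) - π (x (t + 1), a t)) := by
        rw [ha, ha', hπ']
        module
      have hb : ‖a' (t + 1) - a (t + 1)‖ ≤ γ * ‖a' t - a t‖ + β * ε := by
        rw [e]
        refine norm_add₃_le.trans ?_
        rw [norm_smul, norm_smul, norm_smul, Real.norm_of_nonneg hβ0.le,
          Real.norm_of_nonneg (sub_nonneg.2 hβ1.le)]
        have m1 := mul_le_mul_of_nonneg_left h1 hβ0.le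
        have m2 := mul_le_mul_of_nonneg_left h2 (sub_nonneg.2 hβ1.le)
        have m3 := mul_le_mul_of_nonneg_left hc hβ0.le
        linarith
      have m4 := mul_le_mul_of_nonneg_right hb (sub_nonneg.2 hγ1.le)
      have m5 := mul_le_mul_of_nonneg_left ih hγ0.le
      linarith
  intro t ht
  have h := key t ht
  have p1 : 0 < 1 - β := sub_pos.2 hβ1
  have p2 : 0 < 1 - γ := sub_pos.2 hγ1
  rw [le_div_iff₀ (mul_pos p1 p2)]
  have q : 0 ≤ β * (‖a' t - a t‖ * (1 - γ)) := by positivity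
  linarith
end

section
/- Let X be a set of contexts and let π, π̂ : X × ℝ^k → ℝ^k be policies that are each γ-Lipschitz in the action component for some γ ∈ (0,1). Let ℓ : ℝ^k → ℝ be convex and L-Lipschitz. Fix β ∈ (0,1) and define the interpolated policy π'(x,a) = β·π̂(x,a) + (1−β)·π(x,a). Fix a context sequence x₁,…,x_T and an initial action a₀, and define the roll-outs a_t = π(x_t, a_{t−1}) and a'_t = π'(x_t, a'_{t−1}) with a'₀ = a₀. Suppose ε ≥ 0 satisfies ‖π̂(x_t, a_{t−1}) − π(x_t, a_{t−1})‖ ≤ ε for all t = 1,…,T. Then (1/T)·Σ_{t=1}^T ℓ(a'_t) − (1/T)·Σ_{t=1}^T ℓ(a_t) ≤ β·γ·ε·L / ((1−β)·(1−γ)) + β·[(1/T)·Σ_{t=1}^T ℓ(π̂(x_t, a_{t−1})) − (1/T)·Σ_{t=1}^T ℓ(a_t)]. -/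
/-- Theorem 2 of the paper (policy improvement, `T`-independent): for `γ`-Lipschitz
(in action, `γ ∈ (0,1)`) policies `π, π̂`, convex `L`-Lipschitz loss `ℓ`, and
interpolation `π' = β·π̂ + (1−β)·π`, the trajectory loss of `π'` exceeds that of `π`
by at most `β·γ·ε·L/((1−β)(1−γ)) + β·(ℓ_π(π̂) − ℓ_π(π))`. -/
theorem policy_improvement {X : Type*} {k : ℕ}
    (π πhat : X × EuclideanSpace ℝ (Fin k) → EuclideanSpace ℝ (Fin k))
    (γ : ℝ) (hγ : γ ∈ Set.Ioo (0 : ℝ) 1)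
    (hπ : ∀ (x : X) (a a' : EuclideanSpace ℝ (Fin k)),
      ‖π (x, a) - π (x, a')‖ ≤ γ * ‖a - a'‖)
    (hπhat : ∀ (x : X) (a a' : EuclideanSpace ℝ (Fin k)),
      ‖πhat (x, a) - πhat (x, a')‖ ≤ γ * ‖a - a'‖)
    (ℓ : EuclideanSpace ℝ (Fin k) → ℝ)
    (hconv : ConvexOn ℝ Set.univ ℓ)
    (L : ℝ) (hL0 : 0 ≤ L)
    (hlip : ∀ u v : EuclideanSpace ℝ (Fin k), |ℓ u - ℓ v| ≤ L * ‖u - v‖)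
    (β : ℝ) (hβ : β ∈ Set.Ioo (0 : ℝ) 1)
    (π' : X × EuclideanSpace ℝ (Fin k) → EuclideanSpace ℝ (Fin k))
    (hπ' : ∀ (x : X) (a : EuclideanSpace ℝ (Fin k)),
      π' (x, a) = β • πhat (x, a) + (1 - β) • π (x, a))
    (T : ℕ) (hT : 1 ≤ T) (x : ℕ → X) (a₀ : EuclideanSpace ℝ (Fin k))
    (a a' : ℕ → EuclideanSpace ℝ (Fin k))
    (ha0 : a 0 = a₀) (ha'0 : a' 0 = a₀)
    (ha : ∀ t : ℕ, a (t + 1) = π (x (t + 1), a t))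
    (ha' : ∀ t : ℕ, a' (t + 1) = π' (x (t + 1), a' t))
    (ε : ℝ) (hε : 0 ≤ ε)
    (hclose : ∀ t : ℕ, 1 ≤ t → t ≤ T →
      ‖πhat (x t, a (t - 1)) - π (x t, a (t - 1))‖ ≤ ε) :
    (1 / T : ℝ) * ∑ t ∈ Finset.Icc 1 T, ℓ (a' t)
      - (1 / T : ℝ) * ∑ t ∈ Finset.Icc 1 T, ℓ (a t)
    ≤ β * γ * ε * L / ((1 - β) * (1 - γ))
      + β * ((1 / T : ℝ) * ∑ t ∈ Finset.Icc 1 T, ℓ (πhat (x t, a (t - 1)))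
        - (1 / T : ℝ) * ∑ t ∈ Finset.Icc 1 T, ℓ (a t)) := by
  obtain ⟨hγ0, hγ1⟩ := hγ
  obtain ⟨hβ0, hβ1⟩ := hβ
  have h1γ : 0 < 1 - γ := by linarith
  have h1β : 0 < 1 - β := by linarith
  have hlipπ' : ∀ y b b', ‖π' (y, b) - π' (y, b')‖ ≤ γ * ‖b - b'‖ := by
    intro y b b'
    have e : π' (y, b) - π' (y, b')
        = β • (πhat (y, b) - πhat (y, b')) + (1 - β) • (π (y, b) - π (y, b')) := by
      rw [hπ', hπ']; module
    rw [e]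
    refine (norm_add_le _ _).trans ?_
    rw [norm_smul, norm_smul, Real.norm_of_nonneg hβ0.le, Real.norm_of_nonneg h1β.le]
    have h1 := mul_le_mul_of_nonneg_left (hπhat y b b') hβ0.le
    have h2 := mul_le_mul_of_nonneg_left (hπ y b b') h1β.le
    linarith
  have hd : ∀ t, t ≤ T → ‖a' t - a t‖ ≤ β * ε / (1 - γ) := by
    intro t
    induction t with
    | zero => intro _; rw [ha0, ha'0, sub_self, norm_zero]; positivity
    | succ t ih =>
      intro ht
      have ih := ih (by omega)
      have hc := hclose (t + 1) (by omega) ht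
      rw [Nat.add_sub_cancel] at hc
      have e : a' (t + 1) - a (t + 1) = (π' (x (t + 1), a' t) - π' (x (t + 1), a t))
          + β • (πhat (x (t + 1), a t) - π (x (t + 1), a t)) := by
        rw [ha, ha', hπ' _ (a t)]; module
      rw [e]
      refine (norm_add_le _ _).trans ?_
      rw [norm_smul, Real.norm_of_nonneg hβ0.le]
      have h1 := hlipπ' (x (t + 1)) (a' t) (a t)
      have h2 := mul_le_mul_of_nonneg_left hc hβ0.le
      have h3 := mul_le_mul_of_nonneg_left ih hγ0.le
      have h4 : γ * (β * ε / (1 - γ)) + β * ε = β * ε / (1 - γ) := by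
        field_simp; ring
      linarith
  have hC : L * (γ * (β * ε / (1 - γ))) ≤ β * γ * ε * L / ((1 - β) * (1 - γ)) := by
    have e : L * (γ * (β * ε / (1 - γ))) = β * γ * ε * L / (1 - γ) := by ring
    rw [e]
    apply div_le_div_of_nonneg_left (by positivity) (by positivity)
    nlinarith
  set C := β * γ * ε * L / ((1 - β) * (1 - γ)) with hCdef
  have hstep : ∀ t ∈ Finset.Icc 1 T,
      ℓ (a' t) ≤ C + (β * ℓ (πhat (x t, a (t - 1))) + (1 - β) * ℓ (a t)) := by
    intro t ht
    obtain ⟨h1, h2⟩ := Finset.mem_Icc.mp ht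
    obtain ⟨s, rfl⟩ : ∃ s, t = s + 1 := ⟨t - 1, by omega⟩
    rw [Nat.add_sub_cancel]
    have h3 := (le_abs_self _).trans (hlip (a' (s + 1)) (π' (x (s + 1), a s)))
    have h4 : ‖a' (s + 1) - π' (x (s + 1), a s)‖ ≤ γ * (β * ε / (1 - γ)) := by
      rw [ha']
      exact (hlipπ' _ _ _).trans (mul_le_mul_of_nonneg_left (hd s (by omega)) hγ0.le)
    have h5 := mul_le_mul_of_nonneg_left h4 hL0
    have h6 := hconv.2 (Set.mem_univ (πhat (x (s + 1), a s)))
      (Set.mem_univ (π (x (s + 1), a s))) hβ0.le h1β.le (by ring)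
    rw [← hπ', ← ha, smul_eq_mul, smul_eq_mul] at h6
    linarith
  have hsum := Finset.sum_le_sum hstep
  rw [Finset.sum_add_distrib, Finset.sum_add_distrib, ← Finset.mul_sum, ← Finset.mul_sum,
    Finset.sum_const, Nat.card_Icc, Nat.add_sub_cancel, nsmul_eq_mul] at hsum
  have hT0 : (0 : ℝ) < T := by exact_mod_cast hT
  have h7 := mul_le_mul_of_nonneg_left hsum (by positivity : (0 : ℝ) ≤ 1 / T)
  have h8 : (1 / T : ℝ) * (T * C) = C := by field_simp
  rw [mul_add, h8] at h7
  linarith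
end

section
/- Let X be a set of contexts and let π, π̂ : X × ℝ^k → ℝ^k be policies that are each non-expansive in the action component (for every fixed x and all a, a', ‖π(x,a) − π(x,a')‖ ≤ ‖a − a'‖ and likewise for π̂). Fix β ∈ (0,1) and define π'(x,a) = β·π̂(x,a) + (1−β)·π(x,a). Fix a context sequence x₁,…,x_T and an initial action a₀, and define the roll-outs a_t = π(x_t, a_{t−1}) and a'_t = π'(x_t, a'_{t−1}) with a'₀ = a₀. Suppose ε ≥ 0 satisfies ‖π̂(x_t, a_{t−1}) − π(x_t, a_{t−1})‖ ≤ ε for all t = 1,…,T. Then for every t = 0,1,…,T, ‖a'_t − a_t‖ ≤ β·ε·t. -/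
/-- The key claim in the proof of Theorem 1 of the paper: for policies `π, π̂` that are
non-expansive in the action component, the roll-out of the interpolation
`π' = β·π̂ + (1−β)·π` deviates from the roll-out of `π` by at most `β·ε·t` at step `t`,
where `ε` bounds `‖π̂ − π‖` along the roll-out of `π`. -/
theorem nonexpansive_rollout_deviation_bound {X : Type*} {k : ℕ}
    (π πhat : X × EuclideanSpace ℝ (Fin k) → EuclideanSpace ℝ (Fin k))
    (hπ : ∀ (x : X) (a a' : EuclideanSpace ℝ (Fin k)),
      ‖π (x, a) - π (x, a')‖ ≤ ‖a - a'‖)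
    (hπhat : ∀ (x : X) (a a' : EuclideanSpace ℝ (Fin k)),
      ‖πhat (x, a) - πhat (x, a')‖ ≤ ‖a - a'‖)
    (β : ℝ) (hβ : β ∈ Set.Ioo (0 : ℝ) 1)
    (π' : X × EuclideanSpace ℝ (Fin k) → EuclideanSpace ℝ (Fin k))
    (hπ' : ∀ (x : X) (a : EuclideanSpace ℝ (Fin k)),
      π' (x, a) = β • πhat (x, a) + (1 - β) • π (x, a))
    (T : ℕ) (x : ℕ → X) (a₀ : EuclideanSpace ℝ (Fin k))
    (a a' : ℕ → EuclideanSpace ℝ (Fin k))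
    (ha0 : a 0 = a₀) (ha'0 : a' 0 = a₀)
    (ha : ∀ t : ℕ, a (t + 1) = π (x (t + 1), a t))
    (ha' : ∀ t : ℕ, a' (t + 1) = π' (x (t + 1), a' t))
    (ε : ℝ) (hε : 0 ≤ ε)
    (hclose : ∀ t : ℕ, 1 ≤ t → t ≤ T →
      ‖πhat (x t, a (t - 1)) - π (x t, a (t - 1))‖ ≤ ε) :
    ∀ t : ℕ, t ≤ T → ‖a' t - a t‖ ≤ β * ε * t := by
  intro t
  induction t with
  | zero => intro _; simp [ha0, ha'0]
  | succ t ih =>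
    intro ht
    have ih' := ih (by omega)
    have hc := hclose (t + 1) (by omega) ht
    rw [Nat.add_sub_cancel] at hc
    obtain ⟨h0, h1⟩ := hβ
    have h1' : 0 ≤ 1 - β := by linarith
    have e : a' (t + 1) - a (t + 1) =
        β • (πhat (x (t + 1), a' t) - πhat (x (t + 1), a t))
        + (1 - β) • (π (x (t + 1), a' t) - π (x (t + 1), a t))
        + β • (πhat (x (t + 1), a t) - π (x (t + 1), a t)) := by
      rw [ha', ha, hπ']
      module
    have b1 := mul_le_mul_of_nonneg_left (hπhat (x (t + 1)) (a' t) (a t)) h0.le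
    have b2 := mul_le_mul_of_nonneg_left (hπ (x (t + 1)) (a' t) (a t)) h1'
    have b3 := mul_le_mul_of_nonneg_left hc h0.le
    rw [e]
    refine norm_add₃_le.trans ?_
    rw [norm_smul, norm_smul, norm_smul, Real.norm_of_nonneg h0.le, Real.norm_of_nonneg h1']
    push_cast
    linarith
end

section
/- Let X be a set of contexts and let π, π̂ : X × ℝ^k → ℝ^k be policies that are each non-expansive in the action component. Let ℓ : ℝ^k → ℝ be convex and L-Lipschitz. Fix β ∈ (0,1) and define π'(x,a) = β·π̂(x,a) + (1−β)·π(x,a). Fix a context sequence x₁,…,x_T and an initial action a₀, and define the roll-outs a_t = π(x_t, a_{t−1}) and a'_t = π'(x_t, a'_{t−1}) with a'₀ = a₀. Suppose ε ≥ 0 satisfies ‖π̂(x_t, a_{t−1}) − π(x_t, a_{t−1})‖ ≤ ε for all t = 1,…,T. Then (1/T)·Σ_{t=1}^T ℓ(a'_t) − (1/T)·Σ_{t=1}^T ℓ(a_t) ≤ β·ε·L·T + β·[(1/T)·Σ_{t=1}^T ℓ(π̂(x_t, a_{t−1})) − (1/T)·Σ_{t=1}^T ℓ(a_t)]. -/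
/-- Theorem 1 of the paper (`T`-dependent improvement): for non-expansive (in action)
policies `π, π̂`, convex `L`-Lipschitz loss `ℓ`, and interpolation
`π' = β·π̂ + (1−β)·π`, the trajectory loss of `π'` exceeds that of `π` by at most
`β·ε·L·T + β·(ℓ_π(π̂) − ℓ_π(π))`. -/
theorem T_dependent_improvement {X : Type*} {k : ℕ}
    (π πhat : X × EuclideanSpace ℝ (Fin k) → EuclideanSpace ℝ (Fin k))
    (hπ : ∀ (x : X) (a a' : EuclideanSpace ℝ (Fin k)),
      ‖π (x, a) - π (x, a')‖ ≤ ‖a - a'‖)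
    (hπhat : ∀ (x : X) (a a' : EuclideanSpace ℝ (Fin k)),
      ‖πhat (x, a) - πhat (x, a')‖ ≤ ‖a - a'‖)
    (ℓ : EuclideanSpace ℝ (Fin k) → ℝ)
    (hconv : ConvexOn ℝ Set.univ ℓ)
    (L : ℝ) (hL0 : 0 ≤ L)
    (hlip : ∀ u v : EuclideanSpace ℝ (Fin k), |ℓ u - ℓ v| ≤ L * ‖u - v‖)
    (β : ℝ) (hβ : β ∈ Set.Ioo (0 : ℝ) 1)
    (π' : X × EuclideanSpace ℝ (Fin k) → EuclideanSpace ℝ (Fin k))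
    (hπ' : ∀ (x : X) (a : EuclideanSpace ℝ (Fin k)),
      π' (x, a) = β • πhat (x, a) + (1 - β) • π (x, a))
    (T : ℕ) (hT : 1 ≤ T) (x : ℕ → X) (a₀ : EuclideanSpace ℝ (Fin k))
    (a a' : ℕ → EuclideanSpace ℝ (Fin k))
    (ha0 : a 0 = a₀) (ha'0 : a' 0 = a₀)
    (ha : ∀ t : ℕ, a (t + 1) = π (x (t + 1), a t))
    (ha' : ∀ t : ℕ, a' (t + 1) = π' (x (t + 1), a' t))
    (ε : ℝ) (hε : 0 ≤ ε)
    (hclose : ∀ t : ℕ, 1 ≤ t → t ≤ T →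
      ‖πhat (x t, a (t - 1)) - π (x t, a (t - 1))‖ ≤ ε) :
    (1 / T : ℝ) * ∑ t ∈ Finset.Icc 1 T, ℓ (a' t)
      - (1 / T : ℝ) * ∑ t ∈ Finset.Icc 1 T, ℓ (a t)
    ≤ β * ε * L * T
      + β * ((1 / T : ℝ) * ∑ t ∈ Finset.Icc 1 T, ℓ (πhat (x t, a (t - 1)))
        - (1 / T : ℝ) * ∑ t ∈ Finset.Icc 1 T, ℓ (a t)) := by
  obtain ⟨hb0, hb1⟩ := hβ
  have hne : ∀ (y : X) (u v : EuclideanSpace ℝ (Fin k)),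
      ‖π' (y, u) - π' (y, v)‖ ≤ ‖u - v‖ := by
    intro y u v
    have e : π' (y, u) - π' (y, v)
        = β • (πhat (y, u) - πhat (y, v)) + (1 - β) • (π (y, u) - π (y, v)) := by
      rw [hπ', hπ']; module
    rw [e]
    refine (norm_add_le _ _).trans ?_
    rw [norm_smul, norm_smul, Real.norm_of_nonneg hb0.le,
      Real.norm_of_nonneg (by linarith : 0 ≤ 1 - β)]
    have h1 := mul_le_mul_of_nonneg_left (hπhat y u v) hb0.le
    have h2 := mul_le_mul_of_nonneg_left (hπ y u v) (by linarith : 0 ≤ 1 - β)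
    linarith
  have hD : ∀ t : ℕ, t ≤ T → ‖a' t - a t‖ ≤ t * (β * ε) := by
    intro t
    induction t with
    | zero => intro _; simp [ha0, ha'0]
    | succ t ih =>
      intro ht
      have h0 := ih (by omega)
      have h1 := hclose (t + 1) (by omega) ht
      simp only [Nat.add_sub_cancel] at h1
      have e : a' (t + 1) - a (t + 1) = (π' (x (t + 1), a' t) - π' (x (t + 1), a t))
          + β • (πhat (x (t + 1), a t) - π (x (t + 1), a t)) := by
        rw [ha', ha, hπ' _ (a t)]; module
      rw [e]
      refine (norm_add_le _ _).trans ?_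
      rw [norm_smul, Real.norm_of_nonneg hb0.le]
      have h2 := hne (x (t + 1)) (a' t) (a t)
      have h3 := mul_le_mul_of_nonneg_left h1 hb0.le
      push_cast
      linarith
  have hstep : ∀ t ∈ Finset.Icc 1 T, ℓ (a' t) ≤
      β * ε * L * T + β * ℓ (πhat (x t, a (t - 1))) + (1 - β) * ℓ (a t) := by
    intro t ht
    rw [Finset.mem_Icc] at ht
    obtain ⟨s, rfl⟩ : ∃ s, t = s + 1 := ⟨t - 1, by omega⟩
    simp only [Nat.add_sub_cancel]
    have h1 := (le_abs_self _).trans (hlip (a' (s + 1)) (π' (x (s + 1), a s)))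
    have h2 : ‖a' (s + 1) - π' (x (s + 1), a s)‖ ≤ T * (β * ε) := by
      rw [ha']
      refine (hne _ _ _).trans ((hD s (by omega)).trans ?_)
      have : (s : ℝ) ≤ T := by exact_mod_cast (by omega : s ≤ T)
      exact mul_le_mul_of_nonneg_right this (by positivity)
    have h3 := mul_le_mul_of_nonneg_left h2 hL0
    have h4 := hconv.2 (Set.mem_univ (πhat (x (s + 1), a s)))
      (Set.mem_univ (π (x (s + 1), a s))) hb0.le (by linarith : 0 ≤ 1 - β) (by ring)
    rw [← hπ', ← ha] at h4
    simp only [smul_eq_mul] at h4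
    linarith
  have hsum := Finset.sum_le_sum hstep
  rw [Finset.sum_add_distrib, Finset.sum_add_distrib, Finset.sum_const, Nat.card_Icc,
    Nat.add_sub_cancel, nsmul_eq_mul, ← Finset.mul_sum, ← Finset.mul_sum] at hsum
  have hTpos : (0 : ℝ) < T := by exact_mod_cast hT
  have h5 := mul_le_mul_of_nonneg_left hsum (by positivity : (0 : ℝ) ≤ 1 / T)
  have h6 : (1 / T : ℝ) * (T * (β * ε * L * T)) = β * ε * L * T := by
    field_simp
  rw [mul_add, mul_add, h6] at h5
  linarith
end

section
/- Let X be a set of contexts, λ > 0, and let f, f̂ : X × ℝ → ℝ. Fix a context sequence x₁,…,x_T, an expert action sequence a₁*,…,a_T* ∈ ℝ, and a common initial action a₀ = â₀. Define the roll-outs a_t = (f(x_t, a_{t−1}) + λ·a_{t−1})/(1+λ) and â_t = (f̂(x_t, â_{t−1}) + λ·â_{t−1})/(1+λ) for t = 1,…,T. Suppose the average prediction errors satisfy (1/T)·Σ_{t=1}^T |f(x_t, a_{t−1}) − a_t*| ≤ ω and (1/T)·Σ_{t=1}^T |f̂(x_t, â_{t−1}) − a_t*| ≤ ω. If the average gap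 between the expert actions and the roll-out of f satisfies (1/T)·Σ_{t=1}^T |a_t* − a_{t−1}| ≥ 3ω + η·(1+λ), then the roll-out of f̂ is non-smooth: (1/T)·Σ_{t=1}^T |â_t − â_{t−1}| ≥ η. -/
/-- Proposition 1 of the paper (smooth feedback is sometimes necessary): in the smooth
policy class `Π_λ` with 1-d actions, if the average gap between the expert actions and
the roll-out of the current policy is at least `3ω + η(1+λ)`, where `ω` bounds the
average supervised errors, then the policy trained on expert targets rolls out a
non-smooth trajectory: its average first-order difference is at least `η`. -/
theorem expert_feedback_non_smooth {X : Type*}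
    (lam : ℝ) (hlam : 0 < lam)
    (f fhat : X × ℝ → ℝ)
    (T : ℕ) (hT : 1 ≤ T) (x : ℕ → X) (astar : ℕ → ℝ)
    (a ahat : ℕ → ℝ) (h0 : a 0 = ahat 0)
    (haroll : ∀ t : ℕ, a (t + 1) = (f (x (t + 1), a t) + lam * a t) / (1 + lam))
    (hahatroll : ∀ t : ℕ,
      ahat (t + 1) = (fhat (x (t + 1), ahat t) + lam * ahat t) / (1 + lam))
    (ω η : ℝ)
    (hferr : (1 / T : ℝ) * ∑ t ∈ Finset.Icc 1 T, |f (x t, a (t - 1)) - astar t| ≤ ω)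
    (hfhaterr :
      (1 / T : ℝ) * ∑ t ∈ Finset.Icc 1 T, |fhat (x t, ahat (t - 1)) - astar t| ≤ ω)
    (hgap : (1 / T : ℝ) * ∑ t ∈ Finset.Icc 1 T, |astar t - a (t - 1)|
      ≥ 3 * ω + η * (1 + lam)) :
    (1 / T : ℝ) * ∑ t ∈ Finset.Icc 1 T, |ahat t - ahat (t - 1)| ≥ η := by
  have key : ∀ n : ℕ, ∑ t ∈ Finset.Icc 1 n, |astar t - a (t - 1)| + (1 + lam) * |ahat n - a n|
      ≤ 2 * ∑ t ∈ Finset.Icc 1 n, |fhat (x t, ahat (t - 1)) - astar t|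
        + ∑ t ∈ Finset.Icc 1 n, |f (x t, a (t - 1)) - astar t|
        + (1 + lam) * ∑ t ∈ Finset.Icc 1 n, |ahat t - ahat (t - 1)| := by
    intro n
    induction n with
    | zero => simp [h0]
    | succ n ih =>
      simp only [Finset.sum_Icc_succ_top (Nat.le_add_left 1 n), Nat.add_sub_cancel]
      have hp : 0 < 1 + lam := by linarith
      have h1 := haroll n
      have h2 := hahatroll n
      rw [eq_div_iff hp.ne'] at h1 h2
      generalize f (x (n + 1), a n) = F at *
      generalize fhat (x (n + 1), ahat n) = G at *
      have e1 : (1 + lam) * |ahat (n + 1) - ahat n| = |G - ahat n| := by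
        rw [← abs_of_pos hp, ← abs_mul]
        congr 1
        linarith
      have e2 : (1 + lam) * |ahat (n + 1) - a (n + 1)|
          ≤ |G - astar (n + 1)| + |F - astar (n + 1)| + lam * |ahat n - a n| := by
        have : (1 + lam) * |ahat (n + 1) - a (n + 1)|
            = |(G - astar (n + 1)) - (F - astar (n + 1)) + lam * (ahat n - a n)| := by
          rw [← abs_of_pos hp, ← abs_mul]
          congr 1
          linarith
        rw [this, ← abs_of_pos hlam, ← abs_mul, abs_of_pos hlam]
        exact (abs_add_le _ _).trans (by gcongr; exact abs_sub _ _)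
      have e3 : |astar (n + 1) - a n|
          ≤ |G - astar (n + 1)| + |G - ahat n| + |ahat n - a n| := by
        rw [abs_sub_comm G (astar (n + 1))]
        exact (abs_sub_le _ (ahat n) _).trans (by gcongr; exact abs_sub_le _ _ _)
      linarith
  have hk := key T
  have hp : 0 < 1 + lam := by linarith
  have hd : 0 ≤ (1 + lam) * |ahat T - a T| := by positivity
  have hTi : (0 : ℝ) ≤ 1 / T := by positivity
  have hm := mul_le_mul_of_nonneg_left ((le_add_of_nonneg_right hd).trans hk) hTi
  have : (1 + lam) * η
      ≤ (1 + lam) * ((1 / T : ℝ) * ∑ t ∈ Finset.Icc 1 T, |ahat t - ahat (t - 1)|) := by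
    linarith
  exact le_of_mul_le_mul_left this hp
end

section
/- Let X be a set of contexts, λ > 0, and let f, f̂ : X × ℝ → ℝ. Fix a context sequence x₁,…,x_T, an expert action sequence a₁*,…,a_T* ∈ ℝ, and a common initial action a₀ = â₀. Define a_t = (f(x_t, a_{t−1}) + λ·a_{t−1})/(1+λ) and â_t = (f̂(x_t, â_{t−1}) + λ·â_{t−1})/(1+λ) for t = 1,…,T. If (1/T)·Σ_{t=1}^T |f(x_t, a_{t−1}) − a_t*| ≤ ω and (1/T)·Σ_{t=1}^T |f̂(x_t, â_{t−1}) − a_t*| ≤ ω, then the two roll-outs stay close on average: (1/T)·Σ_{t=1}^T |a_t − â_t| ≤ 2ω. -/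
/-- Intermediate step in the proof of Proposition 1 of the paper: in the smooth policy
class `Π_λ` with 1-d actions, if both regressors `f` and `f̂` have average error at most
`ω` relative to the expert actions along their respective roll-outs, then the two
roll-outs stay close on average: `(1/T)·Σ_t |a_t − â_t| ≤ 2ω`. -/
theorem rollouts_stay_close {X : Type*}
    (lam : ℝ) (hlam : 0 < lam)
    (f fhat : X × ℝ → ℝ)
    (T : ℕ) (hT : 1 ≤ T) (x : ℕ → X) (astar : ℕ → ℝ)
    (a ahat : ℕ → ℝ) (h0 : a 0 = ahat 0)
    (haroll : ∀ t : ℕ, a (t + 1) = (f (x (t + 1), a t) + lam * a t) / (1 + lam))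
    (hahatroll : ∀ t : ℕ,
      ahat (t + 1) = (fhat (x (t + 1), ahat t) + lam * ahat t) / (1 + lam))
    (ω : ℝ)
    (hferr : (1 / T : ℝ) * ∑ t ∈ Finset.Icc 1 T, |f (x t, a (t - 1)) - astar t| ≤ ω)
    (hfhaterr :
      (1 / T : ℝ) * ∑ t ∈ Finset.Icc 1 T, |fhat (x t, ahat (t - 1)) - astar t| ≤ ω) :
    (1 / T : ℝ) * ∑ t ∈ Finset.Icc 1 T, |a t - ahat t| ≤ 2 * ω := by
  have key : ∀ n : ℕ, (∑ t ∈ Finset.Icc 1 n, |a t - ahat t|) + lam * |a n - ahat n| ≤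
      (∑ t ∈ Finset.Icc 1 n, |f (x t, a (t - 1)) - astar t|) +
        ∑ t ∈ Finset.Icc 1 n, |fhat (x t, ahat (t - 1)) - astar t| := by
    intro n
    induction n with
    | zero => simp [h0]
    | succ n ih =>
      rw [Finset.sum_Icc_succ_top (by omega), Finset.sum_Icc_succ_top (by omega),
        Finset.sum_Icc_succ_top (by omega), Nat.add_sub_cancel]
      have hpos : 0 < 1 + lam := by linarith
      have e : (1 + lam) * (a (n + 1) - ahat (n + 1)) =
          (f (x (n + 1), a n) - astar (n + 1)) - (fhat (x (n + 1), ahat n) - astar (n + 1))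
            + lam * (a n - ahat n) := by
        rw [haroll, hahatroll]
        field_simp
        ring
      have h1 : (1 + lam) * |a (n + 1) - ahat (n + 1)| ≤
          |f (x (n + 1), a n) - astar (n + 1)| + |fhat (x (n + 1), ahat n) - astar (n + 1)|
            + lam * |a n - ahat n| := by
        rw [← abs_of_pos hpos, ← abs_mul, e]
        refine (abs_add_le _ _).trans ?_
        rw [abs_mul, abs_of_pos hlam]
        gcongr
        exact abs_sub _ _
      linarith
  have hk := key T
  have hd : 0 ≤ lam * |a T - ahat T| := by positivity
  have hle := mul_le_mul_of_nonneg_left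
    (show (∑ t ∈ Finset.Icc 1 T, |a t - ahat t|) ≤
      (∑ t ∈ Finset.Icc 1 T, |f (x t, a (t - 1)) - astar t|) +
        ∑ t ∈ Finset.Icc 1 T, |fhat (x t, ahat (t - 1)) - astar t| by linarith)
    (show (0 : ℝ) ≤ 1 / T by positivity)
  rw [mul_add] at hle
  linarith
end

section
/- Let X be a set of contexts, λ > 0, and let f, f̂ : X × ℝ → ℝ. Fix a context sequence x₁,…,x_T, an expert action sequence a₁*,…,a_T* ∈ ℝ, and a common initial action a₀ = â₀. Define a_t = (f(x_t, a_{t−1}) + λ·a_{t−1})/(1+λ) and â_t = (f̂(x_t, â_{t−1}) + λ·â_{t−1})/(1+λ) for t = 1,…,T. Suppose (1/T)·Σ_{t=1}^T |f(x_t, a_{t−1}) − a_t*| ≤ ω and (1/T)·Σ_{t=1}^T |f̂(x_t, â_{t−1}) − a_t*| ≤ ω, and let Ω = (1/T)·Σ_{t=1}^T |a_t* − a_{t−1}|. Then (1/T)·Σ_{t=1}^T |â_t − â_{t−1}| ≥ (Ω − 3ω)/(1+λ). -/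
/-- Final step in the proof of Proposition 1 of the paper: in the smooth policy class
`Π_λ` with 1-d actions, with `Ω` the average gap between expert actions and the roll-out
of `f`, the average first-order difference of the roll-out of `f̂` is bounded below:
`(1/T)·Σ_t |â_t − â_{t−1}| ≥ (Ω − 3ω)/(1+λ)`. -/
theorem rollout_first_order_difference_lower_bound {X : Type*}
    (lam : ℝ) (hlam : 0 < lam)
    (f fhat : X × ℝ → ℝ)
    (T : ℕ) (hT : 1 ≤ T) (x : ℕ → X) (astar : ℕ → ℝ)
    (a ahat : ℕ → ℝ) (h0 : a 0 = ahat 0)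
    (haroll : ∀ t : ℕ, a (t + 1) = (f (x (t + 1), a t) + lam * a t) / (1 + lam))
    (hahatroll : ∀ t : ℕ,
      ahat (t + 1) = (fhat (x (t + 1), ahat t) + lam * ahat t) / (1 + lam))
    (ω Ω : ℝ)
    (hferr : (1 / T : ℝ) * ∑ t ∈ Finset.Icc 1 T, |f (x t, a (t - 1)) - astar t| ≤ ω)
    (hfhaterr :
      (1 / T : ℝ) * ∑ t ∈ Finset.Icc 1 T, |fhat (x t, ahat (t - 1)) - astar t| ≤ ω)
    (hΩ : Ω = (1 / T : ℝ) * ∑ t ∈ Finset.Icc 1 T, |astar t - a (t - 1)|) :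
    (1 / T : ℝ) * ∑ t ∈ Finset.Icc 1 T, |ahat t - ahat (t - 1)|
      ≥ (Ω - 3 * ω) / (1 + lam) := by
  have hl : 0 < 1 + lam := by linarith
  have key : ∀ n : ℕ, ∑ t ∈ Finset.Icc 1 n, |astar t - a (t - 1)| + (1 + lam) * |a n - ahat n|
      ≤ ∑ t ∈ Finset.Icc 1 n, |f (x t, a (t - 1)) - astar t|
        + 2 * ∑ t ∈ Finset.Icc 1 n, |fhat (x t, ahat (t - 1)) - astar t|
        + (1 + lam) * ∑ t ∈ Finset.Icc 1 n, |ahat t - ahat (t - 1)| := by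
    intro n
    induction n with
    | zero => simp [h0]
    | succ n ih =>
      simp only [Finset.sum_Icc_succ_top (Nat.le_add_left 1 n), Nat.add_sub_cancel]
      have e1 : (1 + lam) * a (n + 1) = f (x (n + 1), a n) + lam * a n := by
        rw [haroll]; field_simp
      have e2 : (1 + lam) * ahat (n + 1) = fhat (x (n + 1), ahat n) + lam * ahat n := by
        rw [hahatroll]; field_simp
      generalize f (x (n + 1), a n) = F at *
      generalize fhat (x (n + 1), ahat n) = G at *
      have h1 : (1 + lam) * |a (n + 1) - ahat (n + 1)|
          ≤ |F - astar (n + 1)| + |G - astar (n + 1)| + lam * |a n - ahat n| := by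
        rw [← abs_of_pos hl, ← abs_mul]
        have : (1 + lam) * (a (n + 1) - ahat (n + 1))
            = (F - astar (n + 1)) - (G - astar (n + 1)) + lam * (a n - ahat n) := by
          linear_combination e1 - e2
        rw [this]
        refine (abs_add_le _ _).trans ?_
        rw [abs_mul, abs_of_pos hlam]
        have := abs_sub (F - astar (n + 1)) (G - astar (n + 1))
        linarith
      have h2 : |astar (n + 1) - a n| ≤ |G - astar (n + 1)| + |a n - ahat n|
          + (1 + lam) * |ahat (n + 1) - ahat n| := by
        have h3 : (1 + lam) * |ahat (n + 1) - ahat n| = |G - ahat n| := by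
          rw [← abs_of_pos hl, ← abs_mul]
          congr 1
          linear_combination e2
        rw [h3]
        have := abs_le.1 (le_refl |G - astar (n + 1)|)
        have := abs_le.1 (le_refl |a n - ahat n|)
        have := abs_le.1 (le_refl |G - ahat n|)
        apply abs_le.2
        constructor <;> linarith
      linarith
  have hT' : (0 : ℝ) < 1 / T := by
    have : (0 : ℝ) < T := by exact_mod_cast hT
    positivity
  have k := key T
  have hd : 0 ≤ (1 + lam) * |a T - ahat T| := by positivity
  have k2 := mul_le_mul_of_nonneg_left (le_trans (le_add_of_nonneg_right hd) k) hT'.le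
  rw [ge_iff_le, div_le_iff₀ hl, hΩ]
  linarith
end
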